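/- Conventions. Throughout, $X'$ is a proper geodesic metric space with a basepoint $x_0'$. For $Q\ge 1$, a $Q$-quasi-geodesic is a continuous map $\gamma\colon I\to X'$ on an interval $I\subseteq\mathbb R$ with $\frac{|t-s|}{Q}-Q\le d(\gamma(s),\gamma(t))\le Q|t-s|+Q$ for all $s,t\in I$. A geodesic is an isometric embedding of a closed interval; a geodesic ray based at $x_0'$ is an isometric embedding $\gamma\colon[0,\infty)\to X'$ with $\gamma(0)=x_0'$. A Morse gauge is a non-decreasing continuous function $M\colon[1,\infty)\to[0,\infty)$. A quasi-geodesic $\gamma$ is $M$-Morse if for every $Q\ge1$, every $Q$-quasi-geodesic with endpoints $\gamma(s)$ and $\gamma(t)$ is contained in the closed $M(Q)$-neighbourhood of $\gamma[s,t]$; it is Morse if it is $M$-Morse for some Morse gauge $M$. The space $X'$ satisfies the Morse local-to-global property if for every $Q\ge1$ and every Morse gauge $M$ there exist a scale $L>0$, a constant $Q'\ge1$ and a Morse gauge $M'$ such that every path $p\colon I\to X'$, all of whose subpaths $p[s,t]$ with $|t-s|\le L$ are $M$-Morse $Q$-quasi-geodesics, is an $M'$-Morse $Q'$-quasi-geodesic.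 The space $X'$ is Gromov hyperbolic if there is $\delta\ge0$ such that each side of every geodesic triangle is contained in the $\delta$-neighbourhood of the union of the other two sides. A geodesic $\gamma$ is $C$-contracting if for every $x\in X'$ the closest-point projection to $\gamma$ of the open ball of radius $d(x,\gamma)$ around $x$ has diameter at most $C$. An action by isometries is geometric if it is proper and cocompact. A strong exhaustion of the Morse boundary of $X'$ is a sequence $(M_n)_{n\in\mathbb N}$ of Morse gauges that is increasing ($M_n\le M_{n+1}$ pointwise for all $n$) such that every Morse geodesic ray based at $x_0'$ is $M_n$-Morse for some $n$, and such that for every Morse gauge $M$ there exists $n=n(M)$ such that every $M$-Morse geodesic ray based at $x_0'$ is $M_n$-Morse. Statement. Let $G$ be a finitely generated group acting geometrically on a proper geodesic metric space $X'$ with basepoint $x_0'$, such that $X'$ is not Gromov hyperbolic and satisfies the Morse local-to-global property. Then for all constants $C_6\ge0$ and $K_0\ge0$ there exist a constant $K\ge K_0$, a strong exhaustion $(M_n)_{n\in\mathbb N}$ of the Morse boundary of $X'$, and a sequence of geodesic segments $\hat\beta_n\colon[0,S_n]\to X'$ with $S_n\ge K$ such that for every $n$: (1) $\hat\beta_n$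 is not $M_n$-Morse; (2) neither $\hat\beta_n[0,K]$ nor $\hat\beta_n[S_n-K,S_n]$ is $C_6$-contracting; (3) $\hat\beta_n(0)$ and $\hat\beta_n(S_n)$ lie in the orbit $G\cdot x_0'$. -/

import Mathlib

namespace MorseLTG

/-- A Morse gauge: a non-decreasing continuous function `[1, ∞) → [0, ∞)`
(only the values on `[1, ∞)` matter). -/
def IsMorseGauge (M : ℝ → ℝ) : Prop :=
  MonotoneOn M (Set.Ici 1) ∧ ContinuousOn M (Set.Ici 1) ∧ ∀ t : ℝ, 1 ≤ t → 0 ≤ M t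

section Space

variable {X : Type*} [MetricSpace X]

/-- The restriction of `γ` to `I ⊆ ℝ` is a (continuous) `Q`-quasi-geodesic. -/
def QGeoOn (Q : ℝ) (I : Set ℝ) (γ : ℝ → X) : Prop :=
  ContinuousOn γ I ∧ ∀ s ∈ I, ∀ t ∈ I,
    |t - s| / Q - Q ≤ dist (γ s) (γ t) ∧ dist (γ s) (γ t) ≤ Q * |t - s| + Q

/-- `γ` is `M`-Morse on `I`: every `Q`-quasi-geodesic with endpoints `γ s` and `γ t`
stays in the closed `M Q`-neighbourhood of `γ[s, t]`. -/
def MorseOn (M : ℝ → ℝ) (I : Set ℝ) (γ : ℝ → X) : Prop :=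
  ∀ Q : ℝ, 1 ≤ Q → ∀ s ∈ I, ∀ t ∈ I, s ≤ t →
    ∀ (lam : ℝ → X) (a b : ℝ), a ≤ b → QGeoOn Q (Set.Icc a b) lam →
      lam a = γ s → lam b = γ t →
      ∀ u ∈ Set.Icc a b, ∃ v ∈ Set.Icc s t, dist (lam u) (γ v) ≤ M Q

/-- `γ` is a geodesic on `I` (an isometric embedding). -/
def GeodesicOn (I : Set ℝ) (γ : ℝ → X) : Prop :=
  ∀ s ∈ I, ∀ t ∈ I, dist (γ s) (γ t) = |t - s|

/-- A geodesic ray based at `x₀`. -/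
def GeodesicRayFrom (x₀ : X) (γ : ℝ → X) : Prop :=
  γ 0 = x₀ ∧ GeodesicOn (Set.Ici 0) γ

/-- `p` is `L`-locally an `M`-Morse `Q`-quasi-geodesic on `I`. -/
def LocMorseQGeoOn (Q : ℝ) (M : ℝ → ℝ) (L : ℝ) (I : Set ℝ) (p : ℝ → X) : Prop :=
  ∀ s ∈ I, ∀ t ∈ I, s ≤ t → t - s ≤ L →
    QGeoOn Q (Set.Icc s t) p ∧ MorseOn M (Set.Icc s t) p

/-- The set of closest-point projections of `x` to `A`. -/
def projSet (A : Set X) (x : X) : Set X :=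
  {y ∈ A | ∀ z ∈ A, dist x y ≤ dist x z}

/-- A subset `A` is `C`-contracting: for every `x`, any two points of the closest-point projection
to `A` of the open ball of radius `d(x, A)` around `x` are at distance at most `C`. -/
def ContractingSet (C : ℝ) (A : Set X) : Prop :=
  ∀ x : X, ∀ y ∈ Metric.ball x (Metric.infDist x A), ∀ y' ∈ Metric.ball x (Metric.infDist x A),
    ∀ p ∈ projSet A y, ∀ p' ∈ projSet A y', dist p p' ≤ C

/-- `Ms` is a strong exhaustion of the Morse boundary of `X` based at `x₀`: a (pointwise)
increasing sequence of Morse gauges such that every Morse geodesic ray based at `x₀` is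
`Ms n`-Morse for some `n`, where `n` can be chosen depending only on the Morse gauge of the ray. -/
def IsStrongExhaustion (x₀ : X) (Ms : ℕ → ℝ → ℝ) : Prop :=
  (∀ n, IsMorseGauge (Ms n)) ∧
  (∀ n, ∀ Q : ℝ, 1 ≤ Q → Ms n Q ≤ Ms (n + 1) Q) ∧
  (∀ γ : ℝ → X, GeodesicRayFrom x₀ γ →
    (∃ M : ℝ → ℝ, IsMorseGauge M ∧ MorseOn M (Set.Ici 0) γ) →
      ∃ n, MorseOn (Ms n) (Set.Ici 0) γ) ∧
  (∀ M : ℝ → ℝ, IsMorseGauge M → ∃ n, ∀ γ : ℝ → X, GeodesicRayFrom x₀ γ →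
    MorseOn M (Set.Ici 0) γ → MorseOn (Ms n) (Set.Ici 0) γ)

end Space

/-- The Morse local-to-global property. -/
def MLTG (X : Type*) [MetricSpace X] : Prop :=
  ∀ Q : ℝ, 1 ≤ Q → ∀ M : ℝ → ℝ, IsMorseGauge M →
    ∃ (L Q' : ℝ) (M' : ℝ → ℝ), 0 < L ∧ 1 ≤ Q' ∧ IsMorseGauge M' ∧
      ∀ I : Set ℝ, I.OrdConnected → ∀ p : ℝ → X,
        LocMorseQGeoOn Q M L I p → QGeoOn Q' I p ∧ MorseOn M' I p

/-- `X` is a geodesic metric space. -/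
def GeodesicSpace (X : Type*) [MetricSpace X] : Prop :=
  ∀ x y : X, ∃ γ : ℝ → X, γ 0 = x ∧ γ (dist x y) = y ∧
    GeodesicOn (Set.Icc 0 (dist x y)) γ

/-- Gromov hyperbolicity via thin geodesic triangles (the sides are traversed cyclically, so
that it is enough to bound one side of each triangle). -/
def GromovHyperbolic (X : Type*) [MetricSpace X] : Prop :=
  ∃ δ : ℝ, 0 ≤ δ ∧
    ∀ (γ₁ γ₂ γ₃ : ℝ → X) (a₁ b₁ a₂ b₂ a₃ b₃ : ℝ),
      a₁ ≤ b₁ → a₂ ≤ b₂ → a₃ ≤ b₃ →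
      GeodesicOn (Set.Icc a₁ b₁) γ₁ → GeodesicOn (Set.Icc a₂ b₂) γ₂ →
        GeodesicOn (Set.Icc a₃ b₃) γ₃ →
      γ₁ b₁ = γ₂ a₂ → γ₂ b₂ = γ₃ a₃ → γ₃ b₃ = γ₁ a₁ →
      ∀ s ∈ Set.Icc a₁ b₁,
        ∃ p ∈ γ₂ '' Set.Icc a₂ b₂ ∪ γ₃ '' Set.Icc a₃ b₃, dist (γ₁ s) p ≤ δ

/-- The action of `G` on `X` is geometric: by isometries, proper (for all compact `K`, `L`, only
finitely many `g` satisfy `g K ∩ L ≠ ∅`) and cocompact. -/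
def IsGeometricAction (G X : Type*) [Group G] [MetricSpace X] [MulAction G X] : Prop :=
  IsIsometricSMul G X ∧ ProperlyDiscontinuousSMul G X ∧
    ∃ K : Set X, IsCompact K ∧ ∀ x : X, ∃ g : G, ∃ k ∈ K, g • k = x

end MorseLTG

namespace MorseLTG

open Set

/-! ### Morse gauges -/

namespace IsMorseGauge

variable {M N : ℝ → ℝ}

theorem comp_add_const (hM : IsMorseGauge M) {c e : ℝ} (hc : 0 ≤ c) (he : 0 ≤ e) :
    IsMorseGauge fun Q => M (Q + c) + e := by
  have hmaps : MapsTo (fun Q : ℝ => Q + c) (Ici 1) (Ici 1) := fun Q hQ => by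
    simp only [mem_Ici] at hQ ⊢; linarith
  refine ⟨fun s hs t ht hst => ?_, ?_, fun t ht => ?_⟩
  · have := hM.1 (hmaps hs) (hmaps ht) (by simpa using hst)
    simpa using this
  · exact (hM.2.1.comp (by fun_prop) hmaps).add continuousOn_const
  · have := hM.2.2 (t + c) (by linarith)
    positivity

theorem comp_three_mul (hM : IsMorseGauge M) : IsMorseGauge fun Q => M (3 * Q) := by
  have hmaps : MapsTo (fun Q : ℝ => 3 * Q) (Ici 1) (Ici 1) := fun Q hQ => by
    simp only [mem_Ici] at hQ ⊢; linarith
  refine ⟨fun s hs t ht hst => ?_, hM.2.1.comp (by fun_prop) hmaps,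
    fun t ht => hM.2.2 _ (by linarith)⟩
  exact hM.1 (hmaps hs) (hmaps ht) (by simpa using hst)

theorem add (hM : IsMorseGauge M) (hN : IsMorseGauge N) : IsMorseGauge fun Q => M Q + N Q :=
  ⟨hM.1.add hN.1, hM.2.1.add hN.2.1, fun t ht => add_nonneg (hM.2.2 t ht) (hN.2.2 t ht)⟩

theorem le_comp_three_mul (hM : IsMorseGauge M) {Q : ℝ} (hQ : 1 ≤ Q) : M Q ≤ M (3 * Q) :=
  hM.1 hQ (show (1 : ℝ) ≤ 3 * Q by linarith) (by linarith)

theorem sum {ι : Type*} (s : Finset ι) {F : ι → ℝ → ℝ} (hF : ∀ i, IsMorseGauge (F i)) :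
    IsMorseGauge fun Q => ∑ i ∈ s, F i Q := by
  refine ⟨fun a ha b hb hab => Finset.sum_le_sum fun i _ => (hF i).1 ha hb hab,
    continuousOn_finsetSum _ fun i _ => (hF i).2.1,
    fun t ht => Finset.sum_nonneg fun i _ => (hF i).2.2 t ht⟩

theorem of_continuous (hc : Continuous M) (hm : ∀ s t, 1 ≤ s → s ≤ t → M s ≤ M t)
    (h0 : 0 ≤ M 1) : IsMorseGauge M :=
  ⟨fun s hs t _ hst => hm s t hs hst, hc.continuousOn, fun t ht => h0.trans (hm 1 t le_rfl ht)⟩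

end IsMorseGauge

/-- How far a `Q`-quasi-geodesic with endpoints at distance at most `T` can travel. -/
def spread (T Q : ℝ) : ℝ := Q * (Q * (T + Q)) + Q

theorem isMorseGauge_spread {T : ℝ} (hT : 0 ≤ T) : IsMorseGauge (spread T) := by
  refine .of_continuous (by unfold spread; fun_prop) (fun s t hs hst => ?_)
    (by unfold spread; positivity)
  unfold spread
  have : 0 ≤ s := by linarith
  have : 0 ≤ t := by linarith
  gcongr

/-- The path that follows `f` up to time `b` and `g` afterwards. -/
noncomputable def gluePath {X : Type*} (b : ℝ) (f g : ℝ → X) (u : ℝ) : X :=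
  if u ≤ b then f u else g u

theorem gluePath_of_le {X : Type*} {b u : ℝ} (f g : ℝ → X) (h : u ≤ b) : gluePath b f g u = f u :=
  if_pos h

theorem gluePath_of_ge {X : Type*} {b u : ℝ} {f g : ℝ → X} (hb : f b = g b) (h : b ≤ u) :
    gluePath b f g u = g u := by
  rcases h.eq_or_lt with rfl | h
  · rw [gluePath_of_le _ _ le_rfl, hb]
  · exact if_neg (not_le.mpr h)

section Space

variable {X : Type*} [MetricSpace X]

/-! ### Geodesics and quasi-geodesics -/

theorem GeodesicOn.mono {I J : Set ℝ} {γ : ℝ → X} (h : GeodesicOn I γ) (hJ : J ⊆ I) :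
    GeodesicOn J γ := fun s hs t ht => h s (hJ hs) t (hJ ht)

theorem GeodesicOn.dist_of_le {I : Set ℝ} {γ : ℝ → X} (h : GeodesicOn I γ) {s t : ℝ}
    (hs : s ∈ I) (ht : t ∈ I) (hst : s ≤ t) : dist (γ s) (γ t) = t - s := by
  rw [h s hs t ht, abs_of_nonneg (by linarith)]

theorem GeodesicOn.continuousOn {I : Set ℝ} {γ : ℝ → X} (h : GeodesicOn I γ) :
    ContinuousOn γ I := by
  refine LipschitzOnWith.continuousOn (K := 1) (LipschitzOnWith.of_dist_le_mul fun s hs t ht => ?_)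
  rw [h s hs t ht, Real.dist_eq, abs_sub_comm]
  simp

theorem GeodesicOn.comp_sub {I J : Set ℝ} {γ : ℝ → X} (h : GeodesicOn I γ) (c : ℝ)
    (hJ : ∀ u ∈ J, c - u ∈ I) : GeodesicOn J fun u => γ (c - u) := fun s hs t ht => by
  rw [h _ (hJ s hs) _ (hJ t ht), ← abs_neg]; ring_nf

theorem GeodesicOn.comp_add {I J : Set ℝ} {γ : ℝ → X} (h : GeodesicOn I γ) (c : ℝ)
    (hJ : ∀ u ∈ J, u + c ∈ I) : GeodesicOn J fun u => γ (u + c) := fun s hs t ht => by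
  rw [h _ (hJ s hs) _ (hJ t ht)]; ring_nf

theorem QGeoOn.mono {Q : ℝ} {I J : Set ℝ} {γ : ℝ → X} (h : QGeoOn Q I γ) (hJ : J ⊆ I) :
    QGeoOn Q J γ := ⟨h.1.mono hJ, fun s hs t ht => h.2 s (hJ hs) t (hJ ht)⟩

theorem QGeoOn.mono_const {Q Q' : ℝ} {I : Set ℝ} {γ : ℝ → X} (h : QGeoOn Q I γ) (hQ : 1 ≤ Q)
    (hQQ' : Q ≤ Q') : QGeoOn Q' I γ := by
  refine ⟨h.1, fun s hs t ht => ?_⟩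
  obtain ⟨h1, h2⟩ := h.2 s hs t ht
  have h3 : |t - s| / Q' ≤ |t - s| / Q := by gcongr
  have h4 : Q * |t - s| ≤ Q' * |t - s| := by gcongr
  constructor <;> linarith

theorem QGeoOn.of_le {Q : ℝ} {I : Set ℝ} {γ : ℝ → X} (hc : ContinuousOn γ I)
    (h : ∀ s ∈ I, ∀ t ∈ I, s ≤ t →
      (t - s) / Q - Q ≤ dist (γ s) (γ t) ∧ dist (γ s) (γ t) ≤ Q * (t - s) + Q) :
    QGeoOn Q I γ := by
  refine ⟨hc, fun s hs t ht => ?_⟩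
  rcases le_total s t with hst | hst
  · rw [abs_of_nonneg (by linarith)]; exact h s hs t ht hst
  · rw [abs_sub_comm, abs_of_nonneg (by linarith), dist_comm]; exact h t ht s hs hst

theorem QGeoOn.bounds {Q : ℝ} {I : Set ℝ} {γ : ℝ → X} (h : QGeoOn Q I γ) {s t : ℝ}
    (hs : s ∈ I) (ht : t ∈ I) (hst : s ≤ t) :
    (t - s) / Q - Q ≤ dist (γ s) (γ t) ∧ dist (γ s) (γ t) ≤ Q * (t - s) + Q := by
  have := h.2 s hs t ht
  rwa [abs_of_nonneg (by linarith)] at this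

/-- The time that a quasi-geodesic spends between two of its points is controlled. -/
theorem QGeoOn.time_le {Q : ℝ} (hQ : 1 ≤ Q) {I : Set ℝ} {γ : ℝ → X} (h : QGeoOn Q I γ) {s t : ℝ}
    (hs : s ∈ I) (ht : t ∈ I) (hst : s ≤ t) : t - s ≤ Q * (dist (γ s) (γ t) + Q) := by
  have h1 := (h.bounds hs ht hst).1
  have hQ0 : 0 < Q := by linarith
  rw [sub_le_iff_le_add, div_le_iff₀ hQ0] at h1
  linarith

theorem GeodesicOn.qGeoOn {I : Set ℝ} {γ : ℝ → X} (h : GeodesicOn I γ) : QGeoOn 1 I γ := by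
  refine ⟨h.continuousOn, fun s hs t ht => ?_⟩
  rw [h s hs t ht]
  constructor <;> linarith

theorem QGeoOn.comp_neg {Q a b : ℝ} {γ : ℝ → X} (h : QGeoOn Q (Icc a b) γ) :
    QGeoOn Q (Icc (-b) (-a)) fun u => γ (-u) := by
  have hmaps : MapsTo (fun u : ℝ => -u) (Icc (-b) (-a)) (Icc a b) := fun u hu =>
    ⟨by linarith [hu.2], by linarith [hu.1]⟩
  refine ⟨h.1.comp (by fun_prop) hmaps, fun s hs t ht => ?_⟩
  have := h.2 (-s) (hmaps hs) (-t) (hmaps ht)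
  rwa [show -t - -s = -(t - s) by ring, abs_neg] at this

/-! ### Gluing paths -/

theorem QGeoOn.glue {Q a b c : ℝ} {f g : ℝ → X} (hf : QGeoOn Q (Icc a b) f)
    (hg : QGeoOn Q (Icc b c) g) (hfg : f b = g b) (hab : a ≤ b) (hbc : b ≤ c)
    (h : ∀ s ∈ Icc a b, ∀ t ∈ Icc b c,
      (t - s) / Q - Q ≤ dist (f s) (g t) ∧ dist (f s) (g t) ≤ Q * (t - s) + Q) :
    QGeoOn Q (Icc a c) (gluePath b f g) := by
  have e1 : EqOn (gluePath b f g) f (Icc a b) := fun u hu => gluePath_of_le f g hu.2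
  have e2 : EqOn (gluePath b f g) g (Icc b c) := fun u hu => gluePath_of_ge hfg hu.1
  refine QGeoOn.of_le ?_ fun s hs t ht hst => ?_
  · rw [← Icc_union_Icc_eq_Icc hab hbc]
    exact (hf.1.congr e1).union_of_isClosed (hg.1.congr e2) isClosed_Icc isClosed_Icc
  · rcases le_total s b with hsb | hsb <;> rcases le_total t b with htb | htb
    · rw [gluePath_of_le _ _ hsb, gluePath_of_le _ _ htb]
      exact hf.bounds ⟨hs.1, hsb⟩ ⟨ht.1, htb⟩ hst
    · rw [gluePath_of_le _ _ hsb, gluePath_of_ge hfg htb]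
      exact h s ⟨hs.1, hsb⟩ t ⟨htb, ht.2⟩
    · obtain rfl : s = b := le_antisymm (hst.trans htb) hsb
      obtain rfl : t = s := le_antisymm htb hst
      rw [gluePath_of_le _ _ le_rfl]
      exact hf.bounds ⟨hs.1, hsb⟩ ⟨ht.1, htb⟩ hst
    · rw [gluePath_of_ge hfg hsb, gluePath_of_ge hfg htb]
      exact hg.bounds ⟨hsb, hs.2⟩ ⟨htb, ht.2⟩ hst

/-- A geodesic from `x` to `y`, parametrised from time `b` on. -/
theorem GeodesicSpace.exists_geodesicOn (hX : GeodesicSpace X) (x y : X) (b : ℝ) :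
    ∃ η : ℝ → X, η b = x ∧ η (b + dist x y) = y ∧ GeodesicOn (Icc b (b + dist x y)) η := by
  obtain ⟨η, h0, h1, h2⟩ := hX x y
  refine ⟨fun u => η (u + -b), by simpa using h0, by simpa using h1, h2.comp_add (-b) ?_⟩
  rintro u ⟨hu1, hu2⟩
  constructor <;> linarith

/-- Appending a geodesic of length at most `c` to a quasi-geodesic. -/
theorem QGeoOn.extend_right (hX : GeodesicSpace X) {Q a b c : ℝ} (hQ : 1 ≤ Q) {lam : ℝ → X}
    (h : QGeoOn Q (Icc a b) lam) (hab : a ≤ b) {y : X} (hy : dist (lam b) y ≤ c) :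
    ∃ (μ : ℝ → X) (b' : ℝ), b ≤ b' ∧ QGeoOn (Q + 2 * c) (Icc a b') μ ∧ μ b' = y ∧
      ∀ u ≤ b, μ u = lam u := by
  obtain ⟨η, h0, h1, h2⟩ := hX.exists_geodesicOn (lam b) y b
  have hd : 0 ≤ dist (lam b) y := dist_nonneg
  have hb' : b ≤ b + dist (lam b) y := by linarith
  refine ⟨gluePath b lam η, b + dist (lam b) y, hb', ?_, ?_, fun u hu => gluePath_of_le _ _ hu⟩
  · refine (h.mono_const hQ (by linarith)).glue (h2.qGeoOn.mono_const le_rfl (by linarith))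
      h0.symm hab hb' fun s hs t ht => ?_
    have hst := h.bounds hs ⟨hab, le_rfl⟩ hs.2
    have ht' : dist (lam b) (η t) = t - b := by
      rw [← h0, h2.dist_of_le ⟨le_rfl, hb'⟩ ht ht.1]
    have t1 := dist_triangle (lam s) (lam b) (η t)
    have t2 := dist_triangle_right (lam s) (lam b) (η t)
    have hbs := hs.2
    have htb := ht.1
    have htc : t - b ≤ c := by linarith [ht.2]
    constructor
    · have e1 : (t - s) / (Q + 2 * c) ≤ (t - s) / Q := by
        gcongr <;> linarith
      have e2 : (t - s) / Q = (b - s) / Q + (t - b) / Q := by rw [← add_div]; ring_nf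
      have e3 : (t - b) / Q ≤ t - b := div_le_self (by linarith) hQ
      linarith
    · have e1 : (t - b) ≤ Q * (t - b) := le_mul_of_one_le_left (by linarith) hQ
      have e2 : 0 ≤ 2 * c * (t - s) := by
        have : 0 ≤ t - s := by linarith
        have : 0 ≤ c := by linarith
        positivity
      nlinarith
  · rw [gluePath_of_ge h0.symm hb', h1]

/-- Attaching geodesics of length at most `c` to both ends of a quasi-geodesic. -/
theorem QGeoOn.extend (hX : GeodesicSpace X) {Q a b c : ℝ} (hQ : 1 ≤ Q) {lam : ℝ → X}
    (h : QGeoOn Q (Icc a b) lam) (hab : a ≤ b) {x y : X} (hx : dist x (lam a) ≤ c)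
    (hy : dist (lam b) y ≤ c) :
    ∃ (μ : ℝ → X) (a' b' : ℝ), a' ≤ a ∧ b ≤ b' ∧ QGeoOn (Q + 4 * c) (Icc a' b') μ ∧
      μ a' = x ∧ μ b' = y ∧ ∀ u ∈ Icc a b, μ u = lam u := by
  have hc : 0 ≤ c := dist_nonneg.trans hx
  obtain ⟨μ, b', hb, hμ, hμb, hμu⟩ := h.extend_right hX hQ hab hy
  obtain ⟨ν, a', ha, hν, hνa, hνu⟩ := hμ.comp_neg.extend_right hX (by linarith)
    (by linarith) (y := x) (c := c) (by rw [dist_comm]; simpa only [neg_neg, hμu a hab] using hx)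
  refine ⟨fun u => ν (-u), -a', b', by linarith, hb, ?_, by simpa using hνa, ?_, fun u hu => ?_⟩
  · have := hν.comp_neg
    rw [neg_neg] at this
    convert this using 1
    ring
  · simp [hνu (-b') (by linarith), hμb]
  · simp [hνu (-u) (by linarith [hu.1]), hμu u hu.2]

/-- Following a quasi-geodesic up to a point closest to `x` and then going straight to `x`. -/
theorem QGeoOn.append_nearest (hX : GeodesicSpace X) {Q a b u₀ : ℝ} (hQ : 1 ≤ Q) {lam : ℝ → X}
    (h : QGeoOn Q (Icc a b) lam) (hu₀ : u₀ ∈ Icc a b) {x : X}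
    (hx : ∀ u ∈ Icc a b, dist (lam u₀) x ≤ dist (lam u) x) :
    ∃ (μ : ℝ → X) (c : ℝ), u₀ ≤ c ∧ QGeoOn (3 * Q) (Icc a c) μ ∧ μ c = x ∧
      ∀ u ≤ u₀, μ u = lam u := by
  obtain ⟨η, h0, h1, h2⟩ := hX.exists_geodesicOn (lam u₀) x u₀
  have hd : 0 ≤ dist (lam u₀) x := dist_nonneg
  have hb' : u₀ ≤ u₀ + dist (lam u₀) x := by linarith
  refine ⟨gluePath u₀ lam η, u₀ + dist (lam u₀) x, hb', ?_, ?_, fun u hu => gluePath_of_le _ _ hu⟩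
  · refine ((h.mono (Icc_subset_Icc_right hu₀.2)).mono_const hQ (by linarith)).glue
      (h2.qGeoOn.mono_const le_rfl (by linarith)) h0.symm hu₀.1 hb' fun s hs t ht => ?_
    have hsI : s ∈ Icc a b := ⟨hs.1, hs.2.trans hu₀.2⟩
    have hst := h.bounds hsI hu₀ hs.2
    have ht' : dist (lam u₀) (η t) = t - u₀ := by
      rw [← h0, h2.dist_of_le ⟨le_rfl, hb'⟩ ht ht.1]
    have ht'' : dist (η t) x = u₀ + dist (lam u₀) x - t := by
      rw [← h2.dist_of_le ht ⟨hb', le_rfl⟩ ht.2, h1]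
    have t1 := dist_triangle (lam s) (lam u₀) (η t)
    have t2 := dist_triangle_right (lam s) (lam u₀) (η t)
    have t3 := dist_triangle (lam s) (η t) x
    have t4 := hx s hsI
    have hbs := hs.2
    have htb := ht.1
    constructor
    · have e2 : (t - s) / (3 * Q) = ((u₀ - s) / Q + (t - u₀) / Q) / 3 := by
        rw [← add_div]; field_simp; ring
      have e3 : (t - u₀) / Q ≤ t - u₀ := div_le_self (by linarith) hQ
      linarith
    · have e1 : (t - u₀) ≤ Q * (t - u₀) := le_mul_of_one_le_left (by linarith) hQ
      have e2 : 0 ≤ 2 * Q * (t - s) := by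
        have : 0 ≤ t - s := by linarith
        positivity
      nlinarith
  · rw [gluePath_of_ge h0.symm hb', h1]

/-- A quasi-geodesic splits at a point closest to `x` into two parts, each of which can be joined
to `x` to form a quasi-geodesic. -/
theorem QGeoOn.split_nearest (hX : GeodesicSpace X) {Q a b : ℝ} (hQ : 1 ≤ Q) {lam : ℝ → X}
    (h : QGeoOn Q (Icc a b) lam) (hab : a ≤ b) (x : X) :
    ∃ u₀ ∈ Icc a b,
      (∃ (μ : ℝ → X) (c : ℝ), u₀ ≤ c ∧ QGeoOn (3 * Q) (Icc a c) μ ∧ μ c = x ∧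
        ∀ u ≤ u₀, μ u = lam u) ∧
      (∃ (μ : ℝ → X) (c : ℝ), c ≤ u₀ ∧ QGeoOn (3 * Q) (Icc c b) μ ∧ μ c = x ∧
        ∀ u, u₀ ≤ u → μ u = lam u) := by
  obtain ⟨u₀, hu₀, hmin⟩ := isCompact_Icc.exists_isMinOn (nonempty_Icc.mpr hab)
    (f := fun u => dist (lam u) x)
    ((continuous_id.dist continuous_const).comp_continuousOn h.1)
  replace hmin : ∀ u ∈ Icc a b, dist (lam u₀) x ≤ dist (lam u) x := fun u hu => hmin hu
  refine ⟨u₀, hu₀, h.append_nearest hX hQ hu₀ hmin, ?_⟩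
  have hmin' : ∀ u ∈ Icc (-b) (-a), dist (lam (-(-u₀))) x ≤ dist (lam (-u)) x := fun u hu => by
    rw [neg_neg]
    exact hmin _ ⟨by linarith [hu.2], by linarith [hu.1]⟩
  obtain ⟨μ, c, hc, hμ, hμc, hμu⟩ := h.comp_neg.append_nearest hX hQ
    ⟨by linarith [hu₀.2], by linarith [hu₀.1]⟩ hmin'
  refine ⟨fun u => μ (-u), -c, by linarith, ?_, by simpa using hμc, fun u hu => ?_⟩
  · simpa using hμ.comp_neg
  · simp [hμu (-u) (by linarith)]

/-! ### Basic properties of Morse paths -/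

namespace MorseOn

variable {M N : ℝ → ℝ} {I J : Set ℝ} {γ : ℝ → X}

theorem mono (h : MorseOn M I γ) (hJ : J ⊆ I) : MorseOn M J γ :=
  fun Q hQ s hs t ht => h Q hQ s (hJ hs) t (hJ ht)

theorem mono_gauge (h : MorseOn M I γ) (hMN : ∀ Q, 1 ≤ Q → M Q ≤ N Q) : MorseOn N I γ :=
  fun Q hQ s hs t ht hst lam a b hab hlam ha hb u hu => by
    obtain ⟨v, hv, hd⟩ := h Q hQ s hs t ht hst lam a b hab hlam ha hb u hu
    exact ⟨v, hv, hd.trans (hMN Q hQ)⟩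

theorem of_reverse (h : MorseOn M I γ) {Q s t : ℝ} (hQ : 1 ≤ Q) (hs : s ∈ I) (ht : t ∈ I)
    (hst : s ≤ t) {lam : ℝ → X} {a b : ℝ} (hab : a ≤ b) (hlam : QGeoOn Q (Icc a b) lam)
    (ha : lam a = γ t) (hb : lam b = γ s) {u : ℝ} (hu : u ∈ Icc a b) :
    ∃ v ∈ Icc s t, dist (lam u) (γ v) ≤ M Q := by
  have := h Q hQ s hs t ht hst (fun u => lam (-u)) (-b) (-a) (by linarith) hlam.comp_neg
    (by simpa using hb) (by simpa using ha) (-u) ⟨by linarith [hu.2], by linarith [hu.1]⟩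
  simpa using this

theorem comp_add (h : MorseOn M I γ) (c : ℝ) (hJ : ∀ u ∈ J, u + c ∈ I) :
    MorseOn M J fun u => γ (u + c) :=
  fun Q hQ s hs t ht hst lam a b hab hlam ha hb u hu => by
    obtain ⟨v, hv, hd⟩ := h Q hQ _ (hJ s hs) _ (hJ t ht) (by linarith) lam a b hab hlam ha hb u hu
    exact ⟨v - c, ⟨by linarith [hv.1], by linarith [hv.2]⟩, by simpa using hd⟩

theorem comp_sub (h : MorseOn M I γ) (c : ℝ) (hJ : ∀ u ∈ J, c - u ∈ I) :
    MorseOn M J fun u => γ (c - u) :=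
  fun Q hQ s hs t ht hst lam a b hab hlam ha hb u hu => by
    obtain ⟨v, hv, hd⟩ :=
      h.of_reverse hQ (hJ t ht) (hJ s hs) (by linarith) hab hlam ha hb hu
    exact ⟨c - v, ⟨by linarith [hv.2], by linarith [hv.1]⟩, by simpa using hd⟩

theorem smul {G : Type*} [Group G] [MulAction G X] [IsIsometricSMul G X] (h : MorseOn M I γ)
    (g : G) : MorseOn M I fun u => g • γ u :=
  fun Q hQ s hs t ht hst lam a b hab hlam ha hb u hu => by
    obtain ⟨v, hv, hd⟩ := h Q hQ s hs t ht hst (fun u => g⁻¹ • lam u) a b hab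
      ⟨(isometry_smul X g⁻¹).continuous.comp_continuousOn hlam.1, fun s hs t ht => by
        simpa using hlam.2 s hs t ht⟩ (by simp [ha]) (by simp [hb]) u hu
    refine ⟨v, hv, ?_⟩
    rwa [← dist_smul g⁻¹, inv_smul_smul]

/-- Concatenations of Morse paths are Morse. -/
theorem concat (hX : GeodesicSpace X) (hM : IsMorseGauge M) (hN : IsMorseGauge N) {a m b : ℝ}
    (h₁ : MorseOn M (Icc a m) γ) (h₂ : MorseOn N (Icc m b) γ) (ham : a ≤ m) (hmb : m ≤ b) :
    MorseOn (fun Q => M (3 * Q) + N (3 * Q)) (Icc a b) γ := by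
  intro Q hQ s hs t ht hst lam a' b' hab hlam ha hb u hu
  have hM3 := hM.2.2 (3 * Q) (by linarith)
  have hN3 := hN.2.2 (3 * Q) (by linarith)
  rcases le_total t m with htm | htm
  · obtain ⟨v, hv, hd⟩ := h₁ Q hQ s ⟨hs.1, hst.trans htm⟩ t ⟨ht.1, htm⟩ hst lam a' b' hab hlam
      ha hb u hu
    exact ⟨v, hv, by linarith [hM.le_comp_three_mul hQ]⟩
  rcases le_total m s with hms | hms
  · obtain ⟨v, hv, hd⟩ := h₂ Q hQ s ⟨hms, hs.2⟩ t ⟨htm, ht.2⟩ hst lam a' b' hab hlam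
      ha hb u hu
    exact ⟨v, hv, by linarith [hN.le_comp_three_mul hQ]⟩
  obtain ⟨u₀, hu₀, ⟨μ, c, hc, hμ, hμc, hμu⟩, ⟨ν, d, hd, hν, hνd, hνu⟩⟩ :=
    hlam.split_nearest hX hQ hab (γ m)
  rcases le_total u u₀ with huu | huu
  · obtain ⟨v, hv, hd⟩ := h₁ (3 * Q) (by linarith) s ⟨hs.1, hms⟩ m ⟨ham, le_rfl⟩ hms μ a' c
      (hu₀.1.trans hc) hμ (by rw [hμu a' hu₀.1, ha]) hμc u ⟨hu.1, huu.trans hc⟩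
    rw [hμu u huu] at hd
    exact ⟨v, ⟨hv.1, hv.2.trans htm⟩, by linarith⟩
  · obtain ⟨v, hv, hd⟩ := h₂ (3 * Q) (by linarith) m ⟨le_rfl, hmb⟩ t ⟨htm, ht.2⟩ htm ν d b'
      (hd.trans hu₀.2) hν hνd (by rw [hνu b' hu₀.2, hb]) u ⟨hd.trans huu, hu.2⟩
    rw [hνu u huu] at hd
    exact ⟨v, ⟨hms.trans hv.1, hv.2⟩, by linarith⟩

/-- Short geodesics are Morse. -/
theorem of_length_le {T a b : ℝ} (h : GeodesicOn (Icc a b) γ) (hT : b - a ≤ T) :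
    MorseOn (spread T) (Icc a b) γ := by
  intro Q hQ s hs t ht hst lam a' b' hab hlam ha hb u hu
  refine ⟨s, ⟨le_rfl, hst⟩, ?_⟩
  have h1 := hlam.time_le hQ ⟨le_rfl, hab⟩ ⟨hab, le_rfl⟩ hab
  rw [ha, hb, h.dist_of_le hs ht hst] at h1
  have h2 := (hlam.bounds ⟨le_rfl, hab⟩ hu hu.1).2
  rw [ha, dist_comm] at h2
  refine h2.trans ?_
  unfold spread
  have : t - s ≤ T := by linarith [hs.1, ht.2]
  have : u - a' ≤ Q * (T + Q) := by
    have := hu.2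
    have : Q * (t - s + Q) ≤ Q * (T + Q) := by gcongr
    linarith
  gcongr

end MorseOn

/-- The gauge inherited by geodesics with endpoints `E`-close to those of an `M`-Morse one. -/
def closeGauge (M : ℝ → ℝ) (E Q : ℝ) : ℝ :=
  M (Q + 4 * (2 * M (1 + 4 * E) + E)) + (2 * M (1 + 4 * E) + E)

theorem isMorseGauge_closeGauge {M : ℝ → ℝ} (hM : IsMorseGauge M) {E : ℝ} (hE : 0 ≤ E) :
    IsMorseGauge (closeGauge M E) := by
  have := hM.2.2 (1 + 4 * E) (by linarith)
  exact hM.comp_add_const (by positivity) (by positivity)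

/-- Geodesics that start and end close to a Morse geodesic are Morse. -/
theorem MorseOn.of_endpoints_close (hX : GeodesicSpace X) {M : ℝ → ℝ}
    {E S T : ℝ} (hE : 0 ≤ E) (hS : 0 ≤ S) (hT : 0 ≤ T) {α β : ℝ → X}
    (hβ : GeodesicOn (Icc 0 S) β) (hβM : MorseOn M (Icc 0 S) β) (hα : GeodesicOn (Icc 0 T) α)
    (h0 : dist (α 0) (β 0) ≤ E) (h1 : dist (α T) (β S) ≤ E) :
    MorseOn (closeGauge M E) (Icc 0 T) α := by
  set c := 2 * M (1 + 4 * E) + E with hc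
  have key : ∀ u ∈ Icc 0 T, dist (α u) (β (min u S)) ≤ c := by
    intro u hu
    obtain ⟨μ, a', b', ha', hb', hμ, hμa, hμb, hμu⟩ :=
      hα.qGeoOn.extend hX le_rfl hT (by rwa [dist_comm]) h1
    obtain ⟨v, hv, hd⟩ := hβM (1 + 4 * E) (by linarith) 0 ⟨le_rfl, hS⟩ S ⟨hS, le_rfl⟩ hS μ a' b'
      (by linarith) hμ hμa hμb u ⟨ha'.trans hu.1, hu.2.trans hb'⟩
    rw [hμu u hu] at hd
    have e1 := hα.dist_of_le ⟨le_rfl, hT⟩ hu hu.1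
    have e2 := hβ.dist_of_le ⟨le_rfl, hS⟩ hv hv.1
    have e3 := dist_triangle4 (α 0) (β 0) (β v) (α u)
    have e4 := dist_triangle4 (β 0) (α 0) (α u) (β v)
    rw [dist_comm (β v) (α u)] at e3
    rw [dist_comm (β 0) (α 0)] at e4
    have e5 : |min u S - v| ≤ E + M (1 + 4 * E) := by
      rw [abs_le]
      rcases le_total u S with h | h
      · rw [min_eq_left h]; constructor <;> linarith
      · rw [min_eq_right h]; constructor <;> linarith [hv.2]
    have e6 := hβ v hv (min u S) ⟨le_min hu.1 hS, min_le_right _ _⟩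
    linarith [dist_triangle (α u) (β v) (β (min u S))]
  intro Q hQ s hs t ht hst lam a b hab hlam ha hb u hu
  obtain ⟨μ, a', b', ha', hb', hμ, hμa, hμb, hμu⟩ := hlam.extend hX hQ hab
    (x := β (min s S)) (y := β (min t S)) (c := c)
    (by rw [ha, dist_comm]; exact key s hs) (by rw [hb]; exact key t ht)
  have hc0 : 0 ≤ c := dist_nonneg.trans (key s hs)
  obtain ⟨v, hv, hd⟩ := hβM (Q + 4 * c) (by linarith) (min s S) ⟨le_min hs.1 hS, min_le_right _ _⟩
    (min t S) ⟨le_min ht.1 hS, min_le_right _ _⟩ (min_le_min_right _ hst) μ a' b'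
    (by linarith) hμ hμa hμb u ⟨ha'.trans hu.1, hu.2.trans hb'⟩
  rw [hμu u hu] at hd
  have hvt : v ≤ t := hv.2.trans (min_le_left _ _)
  have hvS : v ≤ S := hv.2.trans (min_le_right _ _)
  have hw : max v s ∈ Icc s t := ⟨le_max_right _ _, max_le hvt hst⟩
  refine ⟨max v s, hw, ?_⟩
  have e1 : min (max v s) S = v := by
    rcases le_total s v with h | h
    · rw [max_eq_left h, min_eq_left hvS]
    · rw [max_eq_right h]
      refine le_antisymm hv.1 (le_min h hvS)
  have e2 := key (max v s) ⟨hs.1.trans hw.1, hw.2.trans ht.2⟩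
  rw [e1, dist_comm] at e2
  have e3 := dist_triangle (lam u) (β v) (α (max v s))
  unfold closeGauge
  linarith

/-- If all geodesic segments are uniformly Morse, then triangles are thin. -/
theorem gromovHyperbolic_of_forall_morseOn (hX : GeodesicSpace X) {N : ℝ → ℝ}
    (hN : IsMorseGauge N)
    (h : ∀ (γ : ℝ → X) (a b : ℝ), a ≤ b → GeodesicOn (Icc a b) γ → MorseOn N (Icc a b) γ) :
    GromovHyperbolic X := by
  refine ⟨N (3 * 1), hN.2.2 _ (by norm_num), ?_⟩
  intro γ₁ γ₂ γ₃ a₁ b₁ a₂ b₂ a₃ b₃ h₁ h₂ h₃ hγ₁ hγ₂ hγ₃ e₁ e₂ e₃ s hs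
  obtain ⟨u₀, hu₀, ⟨μ, c, hc, hμ, hμc, hμu⟩, ⟨ν, d, hd, hν, hνd, hνu⟩⟩ :=
    hγ₁.qGeoOn.split_nearest hX le_rfl h₁ (γ₂ b₂)
  rcases le_total s u₀ with hsu | hsu
  · obtain ⟨v, hv, hd⟩ := (h γ₃ a₃ b₃ h₃ hγ₃).of_reverse (Q := 3 * 1) (by norm_num)
      ⟨le_rfl, h₃⟩ ⟨h₃, le_rfl⟩ h₃ (hu₀.1.trans hc) hμ (by rw [hμu a₁ hu₀.1, e₃])
      (hμc.trans e₂) ⟨hs.1, hsu.trans hc⟩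
    rw [hμu s hsu] at hd
    exact ⟨γ₃ v, Or.inr ⟨v, hv, rfl⟩, hd⟩
  · obtain ⟨v, hv, hd⟩ := (h γ₂ a₂ b₂ h₂ hγ₂).of_reverse (Q := 3 * 1) (by norm_num)
      ⟨le_rfl, h₂⟩ ⟨h₂, le_rfl⟩ h₂ (hd.trans hu₀.2) hν hνd (by rw [hνu b₁ hu₀.2, e₁])
      ⟨hd.trans hsu, hs.2⟩
    rw [hνu s hsu] at hd
    exact ⟨γ₂ v, Or.inl ⟨v, hv, rfl⟩, hd⟩

/-! ### Contracting sets -/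

theorem exists_last_crossing {f : ℝ → ℝ} {a b R : ℝ} (hab : a ≤ b) (hf : ContinuousOn f (Icc a b))
    (ha : f a ≤ R) (hb : R < f b) :
    ∃ v ∈ Icc a b, f v = R ∧ ∀ w ∈ Icc v b, R ≤ f w := by
  have hcomp : IsCompact (Icc a b ∩ f ⁻¹' Iic R) :=
    isCompact_Icc.of_isClosed_subset (hf.preimage_isClosed_of_isClosed isClosed_Icc isClosed_Iic)
      inter_subset_left
  obtain ⟨v, ⟨hv, hvR⟩, hmax⟩ := hcomp.exists_isGreatest ⟨a, ⟨le_rfl, hab⟩, ha⟩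
  obtain ⟨w, hw, hwR⟩ := intermediate_value_Icc hv.2 (hf.mono (Icc_subset_Icc_left hv.1))
    (show R ∈ Icc (f v) (f b) from ⟨hvR, hb.le⟩)
  obtain rfl : w = v := le_antisymm (hmax ⟨⟨hv.1.trans hw.1, hw.2⟩, hwR.le⟩) hw.1
  refine ⟨w, hv, hwR, fun u hu => ?_⟩
  by_contra! hlt
  have := hmax ⟨⟨hv.1.trans hu.1, hu.2⟩, hlt.le⟩
  obtain rfl : u = w := le_antisymm this hu.1
  linarith

theorem exists_first_crossing {f : ℝ → ℝ} {a b R : ℝ} (hab : a ≤ b)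
    (hf : ContinuousOn f (Icc a b)) (ha : R < f a) (hb : f b ≤ R) :
    ∃ v ∈ Icc a b, f v = R ∧ ∀ w ∈ Icc a v, R ≤ f w := by
  obtain ⟨v, hv, hvR, h⟩ := exists_last_crossing (f := fun u => f (-u)) (a := -b) (b := -a) (R := R)
    (by linarith) (hf.comp (by fun_prop) fun u hu => ⟨by linarith [hu.2], by linarith [hu.1]⟩)
    (by simpa using hb) (by simpa using ha)
  refine ⟨-v, ⟨by linarith [hv.2], by linarith [hv.1]⟩, hvR, fun w hw => ?_⟩
  simpa using h (-w) ⟨by linarith [hw.2], by linarith [hw.1]⟩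

theorem exists_mem_projSet {A : Set X} (hA : IsCompact A) (hne : A.Nonempty) (x : X) :
    ∃ p ∈ projSet A x, dist x p = Metric.infDist x A := by
  obtain ⟨p, hp, h⟩ := hA.exists_infDist_eq_dist hne x
  exact ⟨p, ⟨hp, fun z hz => h ▸ Metric.infDist_le_dist_of_mem hz⟩, h.symm⟩

/-- The projection to a contracting set moves slowly along a quasi-geodesic far from the set. -/
theorem ContractingSet.dist_proj_le {C Q R τ : ℝ} {A : Set X} (hA : IsCompact A)
    (hne : A.Nonempty) (h : ContractingSet C A) (hQ : 1 ≤ Q) (hτ : 0 < τ) (hR : Q * τ + Q < R)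
    {lam : ℝ → X} (n : ℕ) :
    ∀ {a b : ℝ}, a ≤ b → QGeoOn Q (Icc a b) lam →
      (∀ u ∈ Icc a b, R ≤ Metric.infDist (lam u) A) → b - a ≤ n * τ →
      ∀ p ∈ projSet A (lam a), ∀ p' ∈ projSet A (lam b), dist p p' ≤ C * (n + 1) := by
  have hR0 : 0 < R := lt_of_le_of_lt (by positivity) hR
  induction n with
  | zero =>
    intro a b hab _ hfar hn p hp p' hp'
    obtain rfl : a = b := by simp at hn; linarith
    have hpos := hR0.trans_le (hfar a ⟨le_rfl, hab⟩)
    simpa using h (lam a) (lam a) (Metric.mem_ball_self hpos) (lam a) (Metric.mem_ball_self hpos)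
      p hp p' hp'
  | succ n ih =>
    intro a b hab hlam hfar hn p hp p' hp'
    push_cast at hn ⊢
    have hpos := hR0.trans_le (hfar a ⟨le_rfl, hab⟩)
    have hm : min b (a + τ) ∈ Icc a b := ⟨le_min hab (by linarith), min_le_left _ _⟩
    obtain ⟨q, hq, -⟩ := exists_mem_projSet hA hne (lam (min b (a + τ)))
    have hball : lam (min b (a + τ)) ∈ Metric.ball (lam a) (Metric.infDist (lam a) A) := by
      rw [Metric.mem_ball, dist_comm]
      have h1 := (hlam.bounds ⟨le_rfl, hab⟩ hm hm.1).2
      have h2 : min b (a + τ) - a ≤ τ := by linarith [min_le_right b (a + τ)]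
      have h3 : Q * (min b (a + τ) - a) ≤ Q * τ := by gcongr
      linarith [hfar a ⟨le_rfl, hab⟩]
    have d1 := h (lam a) (lam a) (Metric.mem_ball_self hpos) _ hball p hp q hq
    have d2 := ih hm.2 (hlam.mono (Icc_subset_Icc_left hm.1))
      (fun u hu => hfar u ⟨hm.1.trans hu.1, hu.2⟩) (by
        rcases min_choice b (a + τ) with e | e <;> rw [e]
        · rw [sub_self]; positivity
        · linarith) q hq p' hp'
    have d3 := dist_triangle p q p'
    linarith

/-- The estimate of `ContractingSet.dist_proj_le` in terms of the distance to the set. -/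
theorem ContractingSet.dist_proj_le_of_far {C Q R : ℝ} (hC : 0 ≤ C) {A : Set X} (hA : IsCompact A)
    (hne : A.Nonempty) (h : ContractingSet C A) (hQ : 1 ≤ Q) (hR : 4 * Q ≤ R)
    (hRC : 8 * Q ^ 2 * C ≤ R) {lam : ℝ → X} {a b : ℝ} (hab : a ≤ b) (hlam : QGeoOn Q (Icc a b) lam)
    (hfar : ∀ u ∈ Icc a b, R ≤ Metric.infDist (lam u) A) {p p' : X} (hp : p ∈ projSet A (lam a))
    (hp' : p' ∈ projSet A (lam b)) : Q * dist p p' ≤ (b - a) / 2 + 2 * C * Q := by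
  have hR0 : 0 < R := by linarith
  have hQ0 : 0 < Q := by linarith
  set τ := R / (4 * Q) with hτ
  have hτ0 : 0 < τ := by positivity
  have hQτ : Q * τ = R / 4 := by rw [hτ]; field_simp
  have key := h.dist_proj_le hA hne hQ hτ0 (R := R) (by linarith) ⌈(b - a) / τ⌉₊ hab hlam hfar
    (by rw [← div_le_iff₀ hτ0]; exact Nat.le_ceil _) p hp p' hp'
  have hceil : (⌈(b - a) / τ⌉₊ : ℝ) < (b - a) / τ + 1 :=
    Nat.ceil_lt_add_one (div_nonneg (by linarith) hτ0.le)
  have h1 : dist p p' ≤ C * ((b - a) / τ + 2) :=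
    key.trans (mul_le_mul_of_nonneg_left (by linarith) hC)
  have h2 : Q * (C * ((b - a) / τ)) ≤ (b - a) / 2 := by
    have : Q * (C * ((b - a) / τ)) = (8 * Q ^ 2 * C) / R * ((b - a) / 2) := by
      rw [hτ]; field_simp; ring
    rw [this]
    exact mul_le_of_le_one_left (by linarith) ((div_le_one hR0).mpr hRC)
  calc Q * dist p p' ≤ Q * (C * ((b - a) / τ + 2)) := by gcongr
    _ = Q * (C * ((b - a) / τ)) + 2 * C * Q := by ring
    _ ≤ _ := by linarith

/-- The radius outside of which quasi-geodesics make only bounded excursions. -/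
def farRadius (C Q : ℝ) : ℝ := 8 * Q ^ 2 * C + 4 * Q

/-- A bound on the distance from a contracting set of a quasi-geodesic with endpoints on it. -/
def excursion (C Q : ℝ) : ℝ :=
  farRadius C Q + Q * (2 * Q * (2 * farRadius C Q + Q) + 4 * C * Q) + Q

theorem excursion_nonneg {C Q : ℝ} (hC : 0 ≤ C) (hQ : 1 ≤ Q) : 0 ≤ excursion C Q := by
  have : 0 ≤ Q := by linarith
  unfold excursion farRadius; positivity

theorem excursion_mono {C s t : ℝ} (hC : 0 ≤ C) (hs : 1 ≤ s) (hst : s ≤ t) :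
    excursion C s ≤ excursion C t := by
  have : 0 ≤ s := by linarith
  have : 0 ≤ t := by linarith
  unfold excursion farRadius
  gcongr

theorem ContractingSet.infDist_le_excursion {C Q : ℝ} (hC : 0 ≤ C) {A : Set X} (hA : IsCompact A)
    (h : ContractingSet C A) (hQ : 1 ≤ Q) {lam : ℝ → X} {a b : ℝ}
    (hlam : QGeoOn Q (Icc a b) lam) (ha : lam a ∈ A) (hb : lam b ∈ A) {u : ℝ} (hu : u ∈ Icc a b) :
    Metric.infDist (lam u) A ≤ excursion C Q := by
  have hne : A.Nonempty := ⟨_, ha⟩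
  have hQ0 : 0 < Q := by linarith
  set R := farRadius C Q with hR
  have hR4 : 4 * Q ≤ R := by
    have : 0 ≤ 8 * Q ^ 2 * C := by positivity
    rw [hR]; unfold farRadius; linarith
  have hRC : 8 * Q ^ 2 * C ≤ R := by rw [hR]; unfold farRadius; linarith
  have hexc : excursion C Q = R + Q * (2 * Q * (2 * R + Q) + 4 * C * Q) + Q := rfl
  have hR0 : 0 < R := by linarith
  rcases le_or_gt (Metric.infDist (lam u) A) R with hle | hgt
  · rw [hexc]
    have : 0 ≤ Q * (2 * Q * (2 * R + Q) + 4 * C * Q) := by positivity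
    linarith
  have hcont : ContinuousOn (fun u => Metric.infDist (lam u) A) (Icc a b) :=
    (Metric.continuous_infDist_pt A).comp_continuousOn hlam.1
  obtain ⟨v, hv, hvR, hvfar⟩ := exists_last_crossing hu.1
    (hcont.mono (Icc_subset_Icc_right hu.2))
    (by rw [Metric.infDist_zero_of_mem ha]; exact hR0.le) hgt
  obtain ⟨w, hw, hwR, hwfar⟩ := exists_first_crossing hu.2
    (hcont.mono (Icc_subset_Icc_left hu.1)) hgt
    (by rw [Metric.infDist_zero_of_mem hb]; exact hR0.le)
  have hvI : v ∈ Icc a b := ⟨hv.1, hv.2.trans hu.2⟩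
  have hwI : w ∈ Icc a b := ⟨hu.1.trans hw.1, hw.2⟩
  have hvw : v ≤ w := hv.2.trans hw.1
  obtain ⟨p, hp, hpd⟩ := exists_mem_projSet hA hne (lam v)
  obtain ⟨q, hq, hqd⟩ := exists_mem_projSet hA hne (lam w)
  have hsub : QGeoOn Q (Icc v w) lam := hlam.mono (Icc_subset_Icc hvI.1 hwI.2)
  have hpq := h.dist_proj_le_of_far hC hA hne hQ hR4 hRC hvw hsub (fun x hx => by
    rcases le_total x u with hxu | hxu
    · exact hvfar x ⟨hx.1, hxu⟩
    · exact hwfar x ⟨hxu, hx.2⟩) hp hq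
  have htime := hlam.time_le hQ hvI hwI hvw
  have htri : dist (lam v) (lam w) ≤ 2 * R + dist p q := by
    have := dist_triangle4 (lam v) p q (lam w)
    rw [dist_comm q (lam w)] at this
    linarith
  have hle : w - v ≤ 2 * Q * (2 * R + Q) + 4 * C * Q := by nlinarith
  have hvu := (hlam.bounds hvI hu hv.2).2
  have h1 : Metric.infDist (lam u) A ≤ Metric.infDist (lam v) A + dist (lam u) (lam v) :=
    Metric.infDist_le_infDist_add_dist
  rw [dist_comm] at h1
  have h2 : Q * (u - v) ≤ Q * (2 * Q * (2 * R + Q) + 4 * C * Q) := by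
    have := hw.1
    gcongr; linarith
  rw [hexc]
  linarith

/-- A quasi-geodesic with endpoints on a geodesic that stays near the geodesic does not overshoot
its terminal point. -/
theorem GeodesicOn.dist_le_of_overshoot {p q s t v D Q : ℝ} {γ lam : ℝ → X} (hQ : 1 ≤ Q)
    (hγ : GeodesicOn (Icc p q) γ) (hs : s ∈ Icc p q) (ht : t ∈ Icc p q) (hst : s ≤ t) {a b : ℝ}
    (hlam : QGeoOn Q (Icc a b) lam) (ha : lam a = γ s) (hb : lam b = γ t)
    (hnear : ∀ u ∈ Icc a b, ∃ v ∈ Icc p q, dist (lam u) (γ v) ≤ D) {u : ℝ} (hu : u ∈ Icc a b)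
    (hv : v ∈ Icc p q) (htv : t ≤ v) (huv : dist (lam u) (γ v) ≤ D) :
    dist (lam u) (γ t) ≤ spread (3 * D) Q := by
  set A₁ := γ '' Icc p t with hA₁
  set A₂ := γ '' Icc t q with hA₂
  have hab : a ≤ b := hu.1.trans hu.2
  have hc₁ : IsCompact A₁ := isCompact_Icc.image_of_continuousOn
    (hγ.continuousOn.mono (Icc_subset_Icc_right ht.2))
  have hc₂ : IsCompact A₂ := isCompact_Icc.image_of_continuousOn
    (hγ.continuousOn.mono (Icc_subset_Icc_left ht.1))
  have hn₁ : A₁.Nonempty := (nonempty_Icc.mpr ht.1).image _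
  have hn₂ : A₂.Nonempty := (nonempty_Icc.mpr ht.2).image _
  have hcont : ∀ A : Set X, ContinuousOn (fun u => Metric.infDist (lam u) A) (Icc a u) := fun A =>
    (Metric.continuous_infDist_pt A).comp_continuousOn (hlam.1.mono (Icc_subset_Icc_right hu.2))
  have hmid : ∃ w ∈ Icc a u, Metric.infDist (lam w) A₁ ≤ D ∧ Metric.infDist (lam w) A₂ ≤ D := by
    have hu₂ : Metric.infDist (lam u) A₂ ≤ D :=
      (Metric.infDist_le_dist_of_mem (show γ v ∈ A₂ from ⟨v, ⟨htv, hv.2⟩, rfl⟩)).trans huv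
    rcases le_total (Metric.infDist (lam u) A₁) (Metric.infDist (lam u) A₂) with h | h
    · exact ⟨u, ⟨hu.1, le_rfl⟩, h.trans hu₂, hu₂⟩
    have ha₁ : Metric.infDist (lam a) A₁ = 0 :=
      Metric.infDist_zero_of_mem (ha ▸ ⟨s, ⟨hs.1, hst⟩, rfl⟩)
    obtain ⟨w, hw, he⟩ := intermediate_value_Icc hu.1 ((hcont A₁).sub (hcont A₂))
      (show (0 : ℝ) ∈ Icc _ _ from ⟨by
        simp only [Pi.sub_apply, ha₁]; linarith [Metric.infDist_nonneg (x := lam a) (s := A₂)],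
        by simpa using h⟩)
    have he' : Metric.infDist (lam w) A₁ = Metric.infDist (lam w) A₂ := sub_eq_zero.mp he
    obtain ⟨x, hx, hxd⟩ := hnear w ⟨hw.1, hw.2.trans hu.2⟩
    refine ⟨w, hw, ?_⟩
    rcases le_total x t with hxt | hxt
    · have := (Metric.infDist_le_dist_of_mem (x := lam w)
        (show γ x ∈ A₁ from ⟨x, ⟨hx.1, hxt⟩, rfl⟩)).trans hxd
      exact ⟨this, he' ▸ this⟩
    · have := (Metric.infDist_le_dist_of_mem (x := lam w)
        (show γ x ∈ A₂ from ⟨x, ⟨hxt, hx.2⟩, rfl⟩)).trans hxd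
      exact ⟨he' ▸ this, this⟩
  obtain ⟨w, hw, h₁, h₂⟩ := hmid
  obtain ⟨_, ⟨x₁, hx₁, rfl⟩, e₁⟩ := hc₁.exists_infDist_eq_dist hn₁ (lam w)
  obtain ⟨_, ⟨x₂, hx₂, rfl⟩, e₂⟩ := hc₂.exists_infDist_eq_dist hn₂ (lam w)
  have hx₁I : x₁ ∈ Icc p q := ⟨hx₁.1, hx₁.2.trans ht.2⟩
  have hx₂I : x₂ ∈ Icc p q := ⟨ht.1.trans hx₂.1, hx₂.2⟩
  have d₁ := hγ.dist_of_le hx₁I hx₂I (hx₁.2.trans hx₂.1)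
  have d₂ := hγ.dist_of_le hx₁I ht hx₁.2
  have t₁ := dist_triangle_left (γ x₁) (γ x₂) (lam w)
  have t₂ := dist_triangle (lam w) (γ x₁) (γ t)
  have hwt : dist (lam w) (lam b) ≤ 3 * D := by
    rw [hb]; linarith [hx₂.1]
  have htime := hlam.time_le hQ ⟨hw.1, hw.2.trans hu.2⟩ ⟨hab, le_rfl⟩ (hw.2.trans hu.2)
  have hub := (hlam.bounds hu ⟨hab, le_rfl⟩ hu.2).2
  rw [hb] at hub
  have h3 : b - u ≤ Q * (3 * D + Q) := by
    have : Q * (dist (lam w) (lam b) + Q) ≤ Q * (3 * D + Q) := by gcongr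
    linarith [hw.2]
  have h4 : Q * (b - u) ≤ Q * (Q * (3 * D + Q)) := by gcongr
  unfold spread
  linarith

/-- The Morse gauge of `C`-contracting geodesics. -/
def contractingGauge (C Q : ℝ) : ℝ := excursion C Q + spread (3 * excursion C Q) Q

theorem isMorseGauge_contractingGauge {C : ℝ} (hC : 0 ≤ C) :
    IsMorseGauge (contractingGauge C) := by
  refine .of_continuous ?_ (fun s t hs hst => ?_) ?_
  · unfold contractingGauge spread excursion farRadius
    fun_prop
  · have h1 := excursion_mono hC hs hst
    have h0 := excursion_nonneg hC hs
    have : 0 ≤ s := by linarith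
    have : 0 ≤ t := by linarith
    unfold contractingGauge spread
    gcongr
  · have h0 := excursion_nonneg hC (le_refl 1)
    unfold contractingGauge spread
    positivity

/-- Contracting geodesics are Morse. -/
theorem ContractingSet.morseOn {C p q : ℝ} (hC : 0 ≤ C) {γ : ℝ → X}
    (hγ : GeodesicOn (Icc p q) γ) (h : ContractingSet C (γ '' Icc p q)) :
    MorseOn (contractingGauge C) (Icc p q) γ := by
  intro Q hQ s hs t ht hst lam a b hab hlam ha hb u hu
  have hA : IsCompact (γ '' Icc p q) := isCompact_Icc.image_of_continuousOn hγ.continuousOn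
  have hnear : ∀ u ∈ Icc a b, ∃ v ∈ Icc p q, dist (lam u) (γ v) ≤ excursion C Q := fun u hu => by
    have h1 := h.infDist_le_excursion hC hA hQ hlam (ha ▸ ⟨s, hs, rfl⟩) (hb ▸ ⟨t, ht, rfl⟩) hu
    obtain ⟨_, ⟨v, hv, rfl⟩, e⟩ := hA.exists_infDist_eq_dist ⟨_, s, hs, rfl⟩ (lam u)
    exact ⟨v, hv, e ▸ h1⟩
  have hE := excursion_nonneg hC hQ
  have hS : 0 ≤ spread (3 * excursion C Q) Q := by unfold spread; positivity
  obtain ⟨v, hv, hd⟩ := hnear u hu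
  rcases lt_or_ge t v with htv | hvt
  · refine ⟨t, ⟨hst, le_rfl⟩, ?_⟩
    have := hγ.dist_le_of_overshoot hQ hs ht hst hlam ha hb hnear hu hv htv.le hd
    unfold contractingGauge
    linarith
  rcases lt_or_ge v s with hvs | hsv
  · refine ⟨s, ⟨le_rfl, hst⟩, ?_⟩
    have hIcc : ∀ {x y z : ℝ}, z ∈ Icc x y → -z ∈ Icc (-y) (-x) := fun hz =>
      ⟨neg_le_neg hz.2, neg_le_neg hz.1⟩
    have hIcc' : ∀ {x y z : ℝ}, z ∈ Icc (-y) (-x) → -z ∈ Icc x y := fun hz =>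
      ⟨by linarith [hz.2], by linarith [hz.1]⟩
    have hγ' : GeodesicOn (Icc (-q) (-p)) fun u => γ (-u) := by
      simpa using hγ.comp_sub 0 (J := Icc (-q) (-p)) fun u hu => by simpa using hIcc' hu
    have := hγ'.dist_le_of_overshoot hQ (hIcc ht) (hIcc hs) (neg_le_neg hst) (v := -v)
      (D := excursion C Q) hlam.comp_neg (by simpa using hb) (by simpa using ha)
      (fun x hx => by
        obtain ⟨y, hy, hyd⟩ := hnear _ (hIcc' hx)
        exact ⟨-y, hIcc hy, by simpa using hyd⟩)
      (hIcc hu) (hIcc hv) (neg_le_neg hvs.le) (by simpa using hd)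
    simp only [neg_neg] at this
    unfold contractingGauge
    linarith
  · exact ⟨v, ⟨hsv, hvt⟩, by unfold contractingGauge; linarith⟩

/-! ### Geodesics that fellow travel a contracting segment -/

/-- A constant for the fellow traveller property of contracting segments. -/
def fellowConst (C D : ℝ) : ℝ := 2 * (8 * C + 4 + D) + 6 * C + 1 + 3 * D

/-- A geodesic whose endpoints are close to those of `β` passes close to the end of a contracting
initial segment of `β`. -/
theorem exists_dist_le_of_contracting {C D K S T : ℝ} (hC : 0 ≤ C) {α β : ℝ → X} (hK : 0 ≤ K)
    (hKS : K ≤ S) (hT : 0 ≤ T) (hβ : GeodesicOn (Icc 0 S) β) (h : ContractingSet C (β '' Icc 0 K))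
    (hα : GeodesicOn (Icc 0 T) α) (h0 : dist (α 0) (β 0) ≤ D) (h1 : dist (α T) (β S) ≤ D) :
    ∃ u ∈ Icc 0 T, dist (α u) (β K) ≤ fellowConst C D := by
  set A := β '' Icc 0 K with hAdef
  have hD : 0 ≤ D := dist_nonneg.trans h0
  have hS : 0 ≤ S := hK.trans hKS
  have hA : IsCompact A := isCompact_Icc.image_of_continuousOn
    (hβ.continuousOn.mono (Icc_subset_Icc_right hKS))
  have hne : A.Nonempty := (nonempty_Icc.mpr hK).image _
  set R := 8 * C + 4 + D with hR
  have hconst : fellowConst C D = 2 * R + 6 * C + 1 + 3 * D := rfl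
  have hKI : K ∈ Icc 0 S := ⟨hK, hKS⟩
  obtain ⟨pT, hpT, hpTd⟩ := exists_mem_projSet hA hne (α T)
  have hpTK : dist pT (β K) ≤ 2 * D := by
    obtain ⟨⟨w, hw, rfl⟩, hmin⟩ := hpT
    have e1 := hmin (β K) ⟨K, ⟨hK, le_rfl⟩, rfl⟩
    have e2 := hβ.dist_of_le ⟨hw.1, hw.2.trans hKS⟩ hKI hw.2
    have e3 := hβ.dist_of_le hKI ⟨hS, le_rfl⟩ hKS
    have e4 := hβ.dist_of_le ⟨hw.1, hw.2.trans hKS⟩ ⟨hS, le_rfl⟩ (hw.2.trans hKS)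
    have e5 := dist_triangle (α T) (β S) (β K)
    have e6 := dist_triangle (β w) (α T) (β S)
    rw [dist_comm (β S) (β K)] at e5
    rw [dist_comm (β w) (α T)] at e6
    linarith
  have hcont : ContinuousOn (fun u => Metric.infDist (α u) A) (Icc 0 T) :=
    (Metric.continuous_infDist_pt A).comp_continuousOn hα.continuousOn
  rcases le_or_gt (Metric.infDist (α T) A) R with hle | hgt
  · refine ⟨T, ⟨hT, le_rfl⟩, ?_⟩
    have := dist_triangle (α T) pT (β K)
    linarith
  obtain ⟨u, hu, huR, hfar⟩ := exists_last_crossing hT hcont (R := R)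
    (((Metric.infDist_le_dist_of_mem (show β 0 ∈ A from ⟨0, ⟨le_rfl, hK⟩, rfl⟩)).trans h0).trans
      (by linarith)) hgt
  refine ⟨u, hu, ?_⟩
  obtain ⟨p, hp, hpd⟩ := exists_mem_projSet hA hne (α u)
  have hfin : dist p pT ≤ R + 6 * C + 1 := by
    set r := Metric.infDist (α T) A with hr
    have hself : α T ∈ Metric.ball (α T) r := Metric.mem_ball_self (by linarith)
    have hTI : T ∈ Icc 0 T := ⟨hT, le_rfl⟩
    have huT := hα.dist_of_le hu hTI hu.2
    rcases lt_or_ge (T - u) r with hlt | hge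
    · have := h (α T) (α u) (by rw [Metric.mem_ball]; linarith) (α T) hself p hp pT hpT
      linarith
    · have hmI : T - r + 1 ∈ Icc 0 T := ⟨by linarith [hu.1], by linarith⟩
      have hmT := hα.dist_of_le hmI hTI hmI.2
      obtain ⟨q, hq, -⟩ := exists_mem_projSet hA hne (α (T - r + 1))
      have d1 := h (α T) (α (T - r + 1)) (by rw [Metric.mem_ball]; linarith) (α T) hself q hq pT hpT
      have d2 := h.dist_proj_le_of_far hC hA hne le_rfl (R := R) (by linarith) (by linarith)
        (a := u) (b := T - r + 1) (by linarith)
        (hα.mono (Icc_subset_Icc hu.1 hmI.2)).qGeoOn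
        (fun x hx => hfar x ⟨hx.1, hx.2.trans hmI.2⟩) hp hq
      have d3 := dist_triangle p q pT
      have d4 := dist_triangle4 (α u) p pT (α T)
      rw [dist_comm pT (α T)] at d4
      linarith
  have := dist_triangle4 (α u) p pT (β K)
  linarith

/-- The gauge of the initial segment of a geodesic that fellow travels a `C`-contracting one. -/
def fellowGauge (C D : ℝ) : ℝ → ℝ := closeGauge (contractingGauge C) (fellowConst C D)

theorem le_fellowConst {C D : ℝ} (hC : 0 ≤ C) (hD : 0 ≤ D) : D ≤ fellowConst C D := by
  unfold fellowConst; linarith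

theorem isMorseGauge_fellowGauge {C D : ℝ} (hC : 0 ≤ C) (hD : 0 ≤ D) :
    IsMorseGauge (fellowGauge C D) :=
  isMorseGauge_closeGauge (isMorseGauge_contractingGauge hC) (hD.trans (le_fellowConst hC hD))

theorem morseOn_of_fellow_contracting (hX : GeodesicSpace X) {C D K K₁ S T : ℝ} (hC : 0 ≤ C)
    {α β : ℝ → X} (hK : 0 ≤ K) (hKK : K₁ + D + fellowConst C D ≤ K)
    (hKS : K ≤ S) (hT : 0 ≤ T) (hβ : GeodesicOn (Icc 0 S) β) (h : ContractingSet C (β '' Icc 0 K))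
    (hα : GeodesicOn (Icc 0 T) α) (h0 : dist (α 0) (β 0) ≤ D) (h1 : dist (α T) (β S) ≤ D) :
    MorseOn (fellowGauge C D) (Icc 0 K₁) α := by
  have hD : 0 ≤ D := dist_nonneg.trans h0
  have hE := le_fellowConst hC hD
  obtain ⟨u, hu, hd⟩ := exists_dist_le_of_contracting hC hK hKS hT hβ h hα h0 h1
  have hβK := hβ.mono (Icc_subset_Icc_right hKS)
  have := MorseOn.of_endpoints_close hX (hD.trans hE) hK hu.1 hβK (h.morseOn hC hβK)
    (hα.mono (Icc_subset_Icc_right hu.2)) (h0.trans hE) hd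
  refine this.mono (Icc_subset_Icc_right ?_)
  have e1 := hα.dist_of_le ⟨le_rfl, hT⟩ hu hu.1
  have e2 := hβK.dist_of_le ⟨le_rfl, hK⟩ ⟨hK, le_rfl⟩ hK
  have e3 := dist_triangle4 (β 0) (α 0) (α u) (β K)
  rw [dist_comm (β 0) (α 0)] at e3
  linarith

/-! ### Locally Morse geodesics -/

/-- A geodesic whose segments of length `m` starting at integer times are Morse is locally Morse. -/
theorem locMorseQGeoOn_of_forall_nat {M : ℝ → ℝ} {L : ℝ} {m : ℕ} (hm : L + 1 ≤ m) {I : Set ℝ}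
    (hIc : I.OrdConnected) {γ : ℝ → X} (hγ : GeodesicOn I γ)
    (h : ∀ s ∈ I, ∃ k : ℕ, (k : ℝ) ≤ s ∧ s ≤ k + 1 ∧
      MorseOn M (Icc (k : ℝ) (k + m) ∩ I) γ) : LocMorseQGeoOn 1 M L I γ := by
  intro s hs t ht hst hL
  have hsub : Icc s t ⊆ I := hIc.out hs ht
  obtain ⟨k, hk1, hk2, hk⟩ := h s hs
  refine ⟨(hγ.mono hsub).qGeoOn, hk.mono fun u hu => ⟨⟨hk1.trans hu.1, ?_⟩, hsub hu⟩⟩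
  linarith [hu.2]

/-- In a geodesic that is far from being Morse one can cut off an initial segment in such a way
that the remaining geodesic is not Morse and begins with a segment that is not Morse. -/
theorem exists_cut_front (hX : GeodesicSpace X) {M M' N : ℝ → ℝ} {L Q' : ℝ} {m : ℕ}
    (hm : L + 1 ≤ m) (hM' : IsMorseGauge M')
    (hloc : ∀ I : Set ℝ, I.OrdConnected → ∀ p : ℝ → X,
      LocMorseQGeoOn 1 M L I p → QGeoOn Q' I p ∧ MorseOn M' I p)
    (hN : IsMorseGauge N) {T₀ : ℝ} (h1T : 1 ≤ T₀)
    (hNT : ∀ Q, 1 ≤ Q → spread T₀ Q ≤ N Q) {T : ℝ} (hT : 0 ≤ T) {α : ℝ → X}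
    (hα : GeodesicOn (Icc 0 T) α)
    (hnot : ¬ MorseOn (fun Q => M' (3 * Q) + N (3 * Q)) (Icc 0 T) α) :
    ∃ k : ℝ, 0 ≤ k ∧ k + T₀ ≤ T ∧ ¬ MorseOn N (Icc k T) α ∧
      ¬ MorseOn M (Icc k (k + m)) α := by
  have hshort : ∀ k : ℝ, 0 ≤ k → T < k + T₀ → MorseOn N (Icc k T) α := fun k hk hkT =>
    (MorseOn.of_length_le (hα.mono (Icc_subset_Icc_left hk)) (by linarith)).mono_gauge hNT
  by_contra! hcon
  have hex : ∃ k : ℕ, (k : ℝ) ≤ T ∧ MorseOn N (Icc (k : ℝ) T) α :=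
    ⟨⌊T⌋₊, Nat.floor_le hT, hshort _ (by positivity) (by linarith [Nat.lt_floor_add_one T])⟩
  classical
  obtain ⟨hkT, hkN⟩ := Nat.find_spec hex
  have hmin : ∀ k < Nat.find hex, (k : ℝ) ≤ T → ¬ MorseOn N (Icc (k : ℝ) T) α :=
    fun k hk hkT hkN => Nat.find_min hex hk ⟨hkT, hkN⟩
  generalize Nat.find hex = n at hkT hkN hmin
  have hMseg : ∀ k < n, MorseOn M (Icc (k : ℝ) (k + m)) α := fun k hk => by
    have hkT' : (k : ℝ) ≤ T := (Nat.cast_le.mpr hk.le).trans hkT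
    have hnk := hmin k hk hkT'
    refine hcon k (by positivity) ?_ hnk
    by_contra! hlt
    exact hnk (hshort k (by positivity) hlt)
  have hM0 : MorseOn M' (Icc 0 (n : ℝ)) α := by
    rcases Nat.eq_zero_or_pos n with rfl | hn
    · refine absurd (MorseOn.mono_gauge (by simpa using hkN) fun Q hQ => ?_) hnot
      linarith [hN.le_comp_three_mul hQ, hM'.2.2 (3 * Q) (by linarith)]
    · refine (hloc _ ordConnected_Icc α (locMorseQGeoOn_of_forall_nat hm
        ordConnected_Icc (hα.mono (Icc_subset_Icc_right hkT)) fun s hs => ?_)).2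
      rcases hs.2.eq_or_lt with rfl | hlt
      · refine ⟨n - 1, ?_, ?_, (hMseg (n - 1) (by omega)).mono inter_subset_left⟩
        · exact_mod_cast Nat.sub_le n 1
        · exact_mod_cast (by omega : n ≤ n - 1 + 1)
      · refine ⟨⌊s⌋₊, Nat.floor_le hs.1, (Nat.lt_floor_add_one s).le,
          (hMseg _ ?_).mono inter_subset_left⟩
        exact_mod_cast (Nat.floor_le hs.1).trans_lt hlt
  exact hnot (MorseOn.concat hX hM' hN hM0 hkN (by positivity) hkT)

/-- In a non-hyperbolic space with local-to-global geodesics there are, for every gauge `N`,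
geodesics that are not `N`-Morse and neither begin nor end with an `M`-Morse segment. -/
theorem exists_geodesic_not_morseOn_ends (hX : GeodesicSpace X) (hnh : ¬ GromovHyperbolic X)
    {M M' N : ℝ → ℝ} {L Q' : ℝ} {m : ℕ} (hm : L + 1 ≤ m) (hM' : IsMorseGauge M')
    (hloc : ∀ I : Set ℝ, I.OrdConnected → ∀ p : ℝ → X,
      LocMorseQGeoOn 1 M L I p → QGeoOn Q' I p ∧ MorseOn M' I p)
    (hN : IsMorseGauge N) {T₀ : ℝ} (h1T : 1 ≤ T₀) :
    ∃ (α : ℝ → X) (T : ℝ), T₀ ≤ T ∧ GeodesicOn (Icc 0 T) α ∧ ¬ MorseOn N (Icc 0 T) α ∧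
      ¬ MorseOn M (Icc 0 m) α ∧ ¬ MorseOn M (Icc 0 m) fun u => α (T - u) := by
  set N₁ : ℝ → ℝ := fun Q => N Q + spread T₀ Q with hN₁
  have hsp : IsMorseGauge (spread T₀) := isMorseGauge_spread (by linarith)
  have hN₁g : IsMorseGauge N₁ := hN.add hsp
  have hN₁T : ∀ Q, 1 ≤ Q → spread T₀ Q ≤ N₁ Q := fun Q hQ => by
    simp only [hN₁]; linarith [hN.2.2 Q hQ]
  set N₂ : ℝ → ℝ := fun Q => M' (3 * Q) + N₁ (3 * Q) with hN₂
  have hN₂g : IsMorseGauge N₂ := hM'.comp_three_mul.add hN₁g.comp_three_mul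
  have hN₂T : ∀ Q, 1 ≤ Q → spread T₀ Q ≤ N₂ Q := fun Q hQ => by
    simp only [hN₂]
    linarith [hN₁T Q hQ, hN₁g.le_comp_three_mul hQ, hM'.2.2 (3 * Q) (by linarith)]
  obtain ⟨γ, a, b, hab, hγ, hγN⟩ : ∃ (γ : ℝ → X) (a b : ℝ), a ≤ b ∧ GeodesicOn (Icc a b) γ ∧
      ¬ MorseOn (fun Q => M' (3 * Q) + N₂ (3 * Q)) (Icc a b) γ := by
    by_contra! hcon
    exact hnh (gromovHyperbolic_of_forall_morseOn hX
      (hM'.comp_three_mul.add hN₂g.comp_three_mul) fun γ a b hab hγ => hcon γ a b hab hγ)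
  obtain ⟨k, hk, hkT, hkN, hkM⟩ := exists_cut_front hX hm hM' hloc hN₂g h1T hN₂T
    (T := b - a) (by linarith) (α := fun u => γ (u + a))
    (hγ.comp_add a fun u hu => ⟨by linarith [hu.1], by linarith [hu.2]⟩)
    (fun hcon => hγN (by
      simpa using hcon.comp_add (-a) (J := Icc a b) fun u hu =>
        ⟨by linarith [hu.1], by linarith [hu.2]⟩))
  obtain ⟨l, hl, hlT, hlN, hlM⟩ := exists_cut_front hX hm hM' hloc hN₁g h1T hN₁T
    (T := b - a - k) (by linarith) (α := fun u => γ (b - u))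
    (hγ.comp_sub b fun u hu => ⟨by linarith [hu.2], by linarith [hu.1]⟩)
    (fun hcon => hkN (by
      have := hcon.comp_sub (b - a) (J := Icc k (b - a)) fun u hu =>
        ⟨by linarith [hu.2], by linarith [hu.1]⟩
      convert this using 3
      ring))
  refine ⟨fun u => γ (u + (a + k)), b - a - k - l, by linarith,
    hγ.comp_add (a + k) fun u hu => ⟨by linarith [hu.1], by linarith [hu.2]⟩, fun hcon => hlN ?_,
    fun hcon => hkM ?_, fun hcon => hlM ?_⟩
  · have := hcon.comp_sub (b - a - k) (J := Icc l (b - a - k)) fun u hu =>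
      ⟨by linarith [hu.2], by linarith [hu.1]⟩
    refine MorseOn.mono_gauge ?_ (fun Q hQ => (le_add_of_nonneg_right (hsp.2.2 Q hQ) : N Q ≤ N₁ Q))
    convert this using 3
    ring
  · have := hcon.comp_add (-k) (J := Icc k (k + m)) fun u hu =>
      ⟨by linarith [hu.1], by linarith [hu.2]⟩
    convert this using 3
    ring
  · have := hcon.comp_add (-l) (J := Icc l (l + m)) fun u hu =>
      ⟨by linarith [hu.1], by linarith [hu.2]⟩
    convert this using 3
    ring

/-! ### Geometric actions and strong exhaustions -/

variable {G : Type*} [Group G] [MulAction G X]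

theorem IsGeometricAction.exists_cobounded (hG : IsGeometricAction G X) (x₀ : X) :
    ∃ D : ℝ, 0 ≤ D ∧ ∀ x : X, ∃ g : G, dist (g • x₀) x ≤ D := by
  obtain ⟨hiso, -, K, hK, hcov⟩ := hG
  obtain ⟨D, hD⟩ := (hK.isBounded).subset_closedBall x₀
  refine ⟨max D 0, le_max_right _ _, fun x => ?_⟩
  obtain ⟨g, k, hk, rfl⟩ := hcov x
  refine ⟨g, ?_⟩
  rw [dist_smul, dist_comm]
  exact (hD hk).trans (le_max_left _ _)

theorem IsGeometricAction.finite_dist_le [ProperSpace X] (hG : IsGeometricAction G X) (x₀ : X)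
    (r : ℝ) : {g : G | dist (g • x₀) x₀ ≤ r}.Finite := by
  obtain ⟨-, hpd, -⟩ := hG
  refine (hpd.finite_disjoint_inter_image (isCompact_singleton (x := x₀))
    (isCompact_closedBall x₀ r)).subset fun g hg => ⟨g • x₀, ⟨x₀, rfl, rfl⟩, hg⟩

theorem IsGeometricAction.countable [ProperSpace X] (hG : IsGeometricAction G X) (x₀ : X) :
    Countable G := by
  rw [← countable_univ_iff]
  have : (univ : Set G) = ⋃ n : ℕ, {g : G | dist (g • x₀) x₀ ≤ n} := by
    refine (eq_univ_of_forall fun g => ?_).symm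
    obtain ⟨n, hn⟩ := exists_nat_ge (dist (g • x₀) x₀)
    exact mem_iUnion.mpr ⟨n, hn⟩
  rw [this]
  exact countable_iUnion fun n => (hG.finite_dist_le x₀ n).countable

/-- The steps of length `L` of `γ` are, up to an error `D` and translation, in the set `F`. -/
def HasSteps (x₀ : X) (D : ℝ) (L : ℕ) (F : Finset G) (γ : ℝ → X) : Prop :=
  ∀ i : ℕ, ∃ g : G, ∃ w ∈ F, dist (g • x₀) (γ i) ≤ D ∧ dist ((g * w) • x₀) (γ (i + L)) ≤ D

/-- Uniformly Morse rays have their steps in a finite set that forces rays to be uniformly Morse. -/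
theorem exists_hasSteps_morseOn [ProperSpace X] (hX : GeodesicSpace X) (x₀ : X)
    (hG : IsGeometricAction G X) (hmltg : MLTG X) {D : ℝ} (hD : 0 ≤ D)
    (hcob : ∀ x : X, ∃ g : G, dist (g • x₀) x ≤ D) {M : ℝ → ℝ} (hM : IsMorseGauge M) :
    ∃ (L : ℕ) (F : Finset G),
      (∀ γ : ℝ → X, GeodesicRayFrom x₀ γ → MorseOn M (Ici 0) γ → HasSteps x₀ D L F γ) ∧
      ∃ N : ℝ → ℝ, IsMorseGauge N ∧ ∀ γ : ℝ → X, GeodesicRayFrom x₀ γ →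
        HasSteps x₀ D L F γ → MorseOn N (Ici 0) γ := by
  have := hG.1
  obtain ⟨l, Q', M', hl, -, hM', hloc⟩ :=
    hmltg 1 le_rfl _ (isMorseGauge_closeGauge hM (E := 2 * D) (by positivity))
  obtain ⟨L, hL⟩ := exists_nat_ge (l + 1)
  have hfin : {w : G | dist (w • x₀) x₀ ≤ 2 * D + L ∧ ∃ (σ : ℝ → X) (T : ℝ), 0 ≤ T ∧
      GeodesicOn (Icc 0 T) σ ∧ MorseOn M (Icc 0 T) σ ∧ dist x₀ (σ 0) ≤ D ∧
      dist (w • x₀) (σ T) ≤ D}.Finite :=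
    (hG.finite_dist_le x₀ (2 * D + L)).subset fun w hw => hw.1
  refine ⟨L, hfin.toFinset, fun γ hγ hγM i => ?_, M', hM', fun γ hγ hsteps => ?_⟩
  · obtain ⟨g, hg⟩ := hcob (γ i)
    obtain ⟨h, hh⟩ := hcob (γ (i + L))
    have hi : (i : ℝ) ∈ Ici (0 : ℝ) := by simp
    have hiL : (i : ℝ) + L ∈ Ici (0 : ℝ) := by simp only [mem_Ici]; positivity
    refine ⟨g, g⁻¹ * h, ?_, hg, by rwa [mul_inv_cancel_left]⟩
    rw [Finite.mem_toFinset]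
    refine ⟨?_, fun u => g⁻¹ • γ (u + i), L, by positivity, ?_, ?_, ?_, ?_⟩
    · rw [← dist_smul g, smul_smul, mul_inv_cancel_left]
      have e1 := hγ.2.dist_of_le hi hiL (by simp)
      have e2 := dist_triangle4 (h • x₀) (γ (i + L)) (γ i) (g • x₀)
      rw [dist_comm (γ (i + L)) (γ i), dist_comm (γ i) (g • x₀)] at e2
      linarith
    · intro s hs t ht
      rw [dist_smul]
      exact hγ.2.comp_add (J := Icc 0 (L : ℝ)) i
        (fun u hu => add_nonneg hu.1 (Nat.cast_nonneg i)) s hs t ht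
    · exact (hγM.comp_add (J := Icc 0 (L : ℝ)) i
        fun u hu => add_nonneg hu.1 (Nat.cast_nonneg i)).smul g⁻¹
    · rw [← dist_smul g, smul_inv_smul]
      simpa using hg
    · rw [← dist_smul g, smul_inv_smul, smul_smul, mul_inv_cancel_left, add_comm]
      exact hh
  · refine (hloc _ ordConnected_Ici γ (locMorseQGeoOn_of_forall_nat hL ordConnected_Ici
      hγ.2 fun s hs => ⟨⌊s⌋₊, Nat.floor_le hs, (Nat.lt_floor_add_one s).le, ?_⟩)).2
    generalize ⌊s⌋₊ = i
    refine MorseOn.mono ?_ inter_subset_left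
    obtain ⟨g, w, hw, hg, hgw⟩ := hsteps i
    rw [Finite.mem_toFinset] at hw
    obtain ⟨-, σ, T, hT, hσ, hσM, hσ0, hσT⟩ := hw
    have hγ' : GeodesicOn (Icc 0 (L : ℝ)) fun u => γ (u + i) :=
      hγ.2.comp_add (i : ℝ) fun u hu => add_nonneg hu.1 (Nat.cast_nonneg i)
    have := MorseOn.of_endpoints_close hX (E := 2 * D) (by positivity) hT (Nat.cast_nonneg L)
      (β := fun u => g • σ u) (fun s hs t ht => by rw [dist_smul]; exact hσ s hs t ht)
      (hσM.smul g) hγ'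
      (by
        have e := dist_triangle_left (γ i) (g • σ 0) (g • x₀)
        rw [dist_smul] at e
        simp only [zero_add]
        linarith)
      (by
        have e := dist_triangle_left (γ (i + L)) (g • σ T) ((g * w) • x₀)
        rw [mul_smul, dist_smul, ← mul_smul] at e
        rw [add_comm (L : ℝ)]
        linarith)
    simpa using this.comp_add (-(i : ℝ)) (J := Icc (i : ℝ) (i + L)) fun u hu =>
      ⟨by linarith [hu.1], by linarith [hu.2]⟩

theorem exists_isStrongExhaustion [ProperSpace X] (hX : GeodesicSpace X) (x₀ : X)
    (hG : IsGeometricAction G X) (hmltg : MLTG X) :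
    ∃ Ms : ℕ → ℝ → ℝ, IsStrongExhaustion x₀ Ms := by
  obtain ⟨D, hD, hcob⟩ := hG.exists_cobounded x₀
  have := hG.countable x₀
  obtain ⟨e, he⟩ := exists_surjective_nat (ℕ × Finset G)
  have hex : ∀ c : ℕ × Finset G, ∃ N : ℝ → ℝ, IsMorseGauge N ∧
      ((∃ N' : ℝ → ℝ, IsMorseGauge N' ∧ ∀ γ : ℝ → X, GeodesicRayFrom x₀ γ →
        HasSteps x₀ D c.1 c.2 γ → MorseOn N' (Ici 0) γ) →
      ∀ γ : ℝ → X, GeodesicRayFrom x₀ γ → HasSteps x₀ D c.1 c.2 γ → MorseOn N (Ici 0) γ) := by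
    intro c
    by_cases h : ∃ N' : ℝ → ℝ, IsMorseGauge N' ∧ ∀ γ : ℝ → X, GeodesicRayFrom x₀ γ →
        HasSteps x₀ D c.1 c.2 γ → MorseOn N' (Ici 0) γ
    · obtain ⟨N, hN, h'⟩ := h
      exact ⟨N, hN, fun _ => h'⟩
    · exact ⟨spread 0, isMorseGauge_spread le_rfl, fun h' => absurd h' h⟩
  choose N hN hNM using hex
  have huniform : ∀ M : ℝ → ℝ, IsMorseGauge M → ∃ n, ∀ γ : ℝ → X, GeodesicRayFrom x₀ γ →
      MorseOn M (Ici 0) γ →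
        MorseOn (fun Q => ∑ i ∈ Finset.range (n + 1), N (e i) Q) (Ici 0) γ := by
    intro M hM
    obtain ⟨L, F, hsteps, hvalid⟩ := exists_hasSteps_morseOn hX x₀ hG hmltg hD hcob hM
    obtain ⟨n, hn⟩ := he (L, F)
    refine ⟨n, fun γ hγ hγM => ?_⟩
    have hmorse := hNM (e n) (by rw [hn]; exact hvalid) γ hγ (by rw [hn]; exact hsteps γ hγ hγM)
    exact hmorse.mono_gauge fun Q hQ => Finset.single_le_sum (f := fun i => N (e i) Q)
      (fun i _ => (hN (e i)).2.2 Q hQ) (Finset.self_mem_range_succ n)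
  refine ⟨fun n Q => ∑ i ∈ Finset.range (n + 1), N (e i) Q,
    fun n => IsMorseGauge.sum _ fun i => hN (e i), fun n Q hQ => ?_, ?_, huniform⟩
  · beta_reduce
    rw [Finset.sum_range_succ _ (n + 1)]
    exact le_add_of_nonneg_right ((hN _).2.2 Q hQ)
  · rintro γ hγ ⟨M, hM, hγM⟩
    obtain ⟨n, hn⟩ := huniform M hM
    exact ⟨n, hn γ hγ hγM⟩

end Space

end MorseLTG

open MorseLTG in
/-- Construction of geodesic segments between orbit points that are not `M_n`-Morse and whose
initial and terminal subsegments of length `K` are not `C₆`-contracting. -/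
theorem stmt17 {G : Type*} [Group G] [Group.FG G] {X : Type*} [MetricSpace X] [ProperSpace X]
    [MulAction G X] (hX : GeodesicSpace X) (x₀ : X) (hG : IsGeometricAction G X)
    (hnh : ¬ GromovHyperbolic X) (hmltg : MLTG X)
    (C₆ K₀ : ℝ) (hC₆ : 0 ≤ C₆) (hK₀ : 0 ≤ K₀) :
    ∃ K : ℝ, K₀ ≤ K ∧ ∃ Ms : ℕ → ℝ → ℝ, IsStrongExhaustion x₀ Ms ∧
      ∃ (β : ℕ → ℝ → X) (S : ℕ → ℝ),
        ∀ n : ℕ, 0 ≤ S n ∧ K ≤ S n ∧ GeodesicOn (Set.Icc 0 (S n)) (β n) ∧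
          ¬ MorseOn (Ms n) (Set.Icc 0 (S n)) (β n) ∧
          ¬ ContractingSet C₆ (β n '' Set.Icc 0 K) ∧
          ¬ ContractingSet C₆ (β n '' Set.Icc (S n - K) (S n)) ∧
          β n 0 ∈ MulAction.orbit G x₀ ∧ β n (S n) ∈ MulAction.orbit G x₀ := by
  obtain ⟨Ms, hMs⟩ := exists_isStrongExhaustion hX x₀ hG hmltg
  obtain ⟨D, hD, hcob⟩ := hG.exists_cobounded x₀
  obtain ⟨L, Q', M', hL, -, hM', hloc⟩ :=
    hmltg 1 le_rfl _ (isMorseGauge_fellowGauge hC₆ hD)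
  obtain ⟨m, hm⟩ := exists_nat_ge (L + 1)
  have hE := le_fellowConst hC₆ hD
  set K := K₀ + m + D + fellowConst C₆ D with hK
  have hm0 : (0 : ℝ) ≤ m := Nat.cast_nonneg m
  have hK0 : 0 ≤ K := by linarith
  have hmK : m + D + fellowConst C₆ D ≤ K := by linarith
  refine ⟨K, by linarith, Ms, hMs, ?_⟩
  suffices h : ∀ n, ∃ (β : ℝ → X) (S : ℝ), 0 ≤ S ∧ K ≤ S ∧ GeodesicOn (Set.Icc 0 S) β ∧
      ¬ MorseOn (Ms n) (Set.Icc 0 S) β ∧ ¬ ContractingSet C₆ (β '' Set.Icc 0 K) ∧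
      ¬ ContractingSet C₆ (β '' Set.Icc (S - K) S) ∧
      β 0 ∈ MulAction.orbit G x₀ ∧ β S ∈ MulAction.orbit G x₀ by
    choose β S h using h
    exact ⟨β, S, h⟩
  intro n
  obtain ⟨α, T, hT, hα, hαN, hα₀, hα₁⟩ := exists_geodesic_not_morseOn_ends hX hnh hm hM' hloc
    (isMorseGauge_closeGauge (hMs.1 n) hD) (T₀ := K + 2 * D) (by linarith)
  have hT0 : 0 ≤ T := by linarith
  obtain ⟨g, hg⟩ := hcob (α 0)
  obtain ⟨h, hh⟩ := hcob (α T)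
  obtain ⟨β, hβ₀, hβ₁, hβ⟩ := hX (g • x₀) (h • x₀)
  set S := dist (g • x₀) (h • x₀) with hS
  have hKS : K ≤ S := by
    have e1 := hα.dist_of_le ⟨le_rfl, hT0⟩ ⟨hT0, le_rfl⟩ hT0
    have e2 := dist_triangle4 (α 0) (g • x₀) (h • x₀) (α T)
    rw [dist_comm (α 0) (g • x₀)] at e2
    linarith
  have hS0 : 0 ≤ S := dist_nonneg
  have h0 : dist (α 0) (β 0) ≤ D := by rwa [hβ₀, dist_comm]
  have h1 : dist (α T) (β S) ≤ D := by rwa [hβ₁, dist_comm]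
  refine ⟨β, S, hS0, hKS, hβ, fun hcon => hαN ?_, fun hcon => hα₀ ?_, fun hcon => hα₁ ?_,
    hβ₀ ▸ MulAction.mem_orbit x₀ g, hβ₁ ▸ MulAction.mem_orbit x₀ h⟩
  · exact MorseOn.of_endpoints_close hX hD hS0 hT0 hβ hcon hα h0 h1
  · exact morseOn_of_fellow_contracting hX hC₆ hK0 hmK hKS hT0 hβ hcon hα h0 h1
  · refine morseOn_of_fellow_contracting hX hC₆ hK0 hmK hKS hT0 (β := fun u => β (S - u))
      (hβ.comp_sub S fun u hu => ⟨by linarith [hu.2], by linarith [hu.1]⟩) ?_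
      (hα.comp_sub T fun u hu => ⟨by linarith [hu.2], by linarith [hu.1]⟩) (by simpa using h1)
      (by simpa using h0)
    have himage : (fun u => β (S - u)) '' Set.Icc 0 K = β '' Set.Icc (S - K) S := by
      rw [← Set.image_image β, Set.image_const_sub_Icc, sub_zero]
    rwa [himage]
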